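/- **Setting.** Fix a set $\mathcal C$ of nominal constants and a set $\mathcal P$ of predicate constants with arities. Nominal terms $o$ are nominal constants and nominal variables. Formulae are built from predications $\varphi o_1\ldots o_n$, negative predications $-\varphi o_1\ldots o_n$ and $\bot$ by $\&,\vee,\supset,\forall,\exists$. For finite $Q\subseteq\mathcal P$, $o_1=^+_Q o_2$ abbreviates the conjunction over $\varphi\in Q$ of $\forall z_1\ldots\forall z_n\bigwedge_{j}\bigl(\varphi z_1\ldots o_1\ldots z_n\leftrightarrow\varphi z_1\ldots o_2\ldots z_n\bigr)$, with $o_1$, resp. $o_2$, at place $j$ ($1\le j\le n$); $o_1=^-_Q o_2$ is the same with $-\varphi$ for $\varphi$ (an empty conjunction is $\bot\supset\bot$). For predications $\varphi(x),\psi(x)$ containing $x$, $\psi(\iota_Qx\varphi(x))$ abbreviates $\exists x\varphi(x)\ \&\ \forall u\forall v((\varphi(u)\&\varphi(v))\supset u=^+_Qv)\ \&\ \forall w(\varphi(w)\supset\psi(w))$; the negative variant $\psi(\iota_Qx{-}\varphi(x))$ has $-\varphi$ and $=^-_Q$ instead, and in both $\psi$ may be replaced by $-\psi$. A subatomic base assigns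 to each $\tau\in\mathcal C\cup\mathcal P$ a set $\tau\Gamma$ of atomic sentences containing $\tau$. A *unit* is a formula or a term assumption $\tau\Gamma$; its *expression* is the formula itself, resp. the constant $\tau$. **Derivations** of the $\mathbf{I0}(\mathcal S^=_b)\iota$-system over the base are natural deduction trees with the following rules. Every unit may be assumed; formulae can be discharged, term assumptions are never discharged. - The intuitionistic I- and E-rules for $\&,\vee,\supset,\forall,\exists$ and $\bot i$ (from $\bot$ infer any formula); the minor premisses and the conclusion of $\vee E$ and $\exists E$ may be term assumptions; the eigenterm $o$ of $\forall I$ and $\exists E$ may be a variable or a nominal constant that occurs neither in the quantified formula, nor (for $\exists E$) in the conclusion, nor in any other open assumption, term assumptions $o\Gamma$ included. Moreover $\forall xA$ may be inferred from the premisses $A(x/\alpha)$ for all $\alpha\in\mathcal C$. - $as$I (resp. $-as$I): from $\varphi\Gamma,\alpha_1\Gamma,\ldots,\alpha_n\Gamma$ infer $\varphi\alpha_1\ldots\alpha_n$ (resp. $-\varphi\alpha_1\ldots\alpha_n$), provided $\varphi\alpha_1\ldots\alpha_n$ is (resp. is not) in $\varphi\Gamma\cap\alpha_1\Gamma\cap\ldots\cap\alpha_n\Gamma$;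 $as$E, $-as$E: from $\varphi\alpha_1\ldots\alpha_n$, resp. $-\varphi\alpha_1\ldots\alpha_n$, infer any one of $\varphi\Gamma,\alpha_1\Gamma,\ldots,\alpha_n\Gamma$. - $=^+_Q$: call atomic sentences $\varphi(\alpha),\varphi(\beta)$ mirror sentences if $\varphi(\alpha)$ contains $\alpha$ and $\varphi(\beta)$ results from it by exchanging $\alpha$ and $\beta$ everywhere. Introduction: infer $\alpha=^+_Q\beta$ from derivations of $\varphi(\beta)$ from $\varphi(\alpha)$ and of $\varphi(\alpha)$ from $\varphi(\beta)$, for all mirror sentences with $\varphi\in Q$, discharging these assumptions. Elimination: from the major premiss $\alpha=^+_Q\beta$ and one of two such mirror sentences infer the other. The rules for $=^-_Q$ are the same with $-\varphi$ for $\varphi$. - $\iota_Q$I: infer a qualified definiteness sentence (of any of the four forms) from its three conjuncts; $\iota_Q$E1–3: infer any one of the conjuncts from it. A derivation is *normal* if (1) no major premiss of an E-rule is the conclusion of an I-rule or of $\bot i$ (no maximal formula), (2) no major premiss of an E-rule is the conclusion of $\vee E$ or $\exists E$ (no permutative detour), and (3) every application of $\vee E$ or $\exists E$ discharges at least one assumption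 above each minor premiss (no simplifiable detour). Here the E-rules are all the elimination rules above, subatomic, identity and definiteness rules included. The *subexpression* relation is the least reflexive and transitive relation on expressions such that $A,B$ are subexpressions of $A\&B$, $A\vee B$, $A\supset B$; every instance $A(x/o)$ is one of $\forall xA$ and $\exists xA$; and the predicate constant and the nominal constants occurring in $\varphi o_1\ldots o_n$ or $-\varphi o_1\ldots o_n$ are subexpressions of it. A unit is said to be a subexpression when its expression is. **Theorem (Subexpression property).** Let $\mathcal D$ be a normal derivation of a unit $U$ from a set of units $\Gamma$ (i.e. all open assumptions of $\mathcal D$, including its term assumptions, are in $\Gamma$) in an $\mathbf{I0}(\mathcal S^=_b)\iota$-system. Then every unit occurring in $\mathcal D$ is a subexpression of the expression of some unit in $\Gamma\cup\{U\}$. -/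

import Mathlib

universe u

namespace QDef

/-! ### The language -/

/-- Nominal constants `𝒞`, predicate constants `𝒫`, and the arities of the latter. -/
structure Sig : Type (u + 1) where
  Const : Type u
  Pred : Type u
  arity : Pred → ℕ

variable {S : Sig.{u}}

/-- The non-logical constants `τ ∈ 𝒞 ∪ 𝒫`. -/
abbrev NonLog (S : Sig.{u}) : Type u := S.Const ⊕ S.Pred

/-- Nominal terms `o`: nominal constants and (free) nominal variables. -/
inductive Nom (S : Sig.{u}) : Type u where
  | const (c : S.Const)
  | var (x : ℕ)

/-- What may fill an argument place inside the scope of `n` quantifiers: a nominal term, or a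
variable bound by one of these quantifiers (de Bruijn index, `0` is the innermost).  Free variables
are named and bound ones are not, so formulae are taken up to renaming of bound variables and every
nominal term is free for every bound variable. -/
inductive Tm (S : Sig.{u}) (n : ℕ) : Type u where
  | free (o : Nom S)
  | bound (i : Fin n)

namespace Tm

/-- The term, moved inside the scope of `k` further quantifiers. -/
def shift {n : ℕ} (k : ℕ) : Tm S n → Tm S (n + k)
  | .free o => .free o
  | .bound i => .bound (i.addNat k)

/-- Replace the bound variables according to `σ`. -/
def subst {n m : ℕ} (σ : Fin n → Tm S m) : Tm S n → Tm S m
  | .free o => .free o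
  | .bound i => σ i

/-- A replacement of bound variables, moved inside the scope of one further quantifier. -/
def lift {n m : ℕ} (σ : Fin n → Tm S m) : Fin (n + 1) → Tm S (m + 1) :=
  Fin.cases (.bound 0) fun i => (σ i).shift 1

end Tm

/-- The two modes of predication: `φ o₁ … oₙ` (`pos`) and its failure `−φ o₁ … oₙ` (`neg`). -/
inductive Sign : Type where
  | pos
  | neg

/-- Formulae in the scope of `n` quantifiers. -/
inductive Fm (S : Sig.{u}) : ℕ → Type u where
  | pred {n : ℕ} (s : Sign) (p : S.Pred) (ts : Fin (S.arity p) → Tm S n) : Fm S n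
  | bot {n : ℕ} : Fm S n
  | and {n : ℕ} (A B : Fm S n) : Fm S n
  | or {n : ℕ} (A B : Fm S n) : Fm S n
  | imp {n : ℕ} (A B : Fm S n) : Fm S n
  | all {n : ℕ} (A : Fm S (n + 1)) : Fm S n
  | ex {n : ℕ} (A : Fm S (n + 1)) : Fm S n

/-- Formulae proper. -/
abbrev Form (S : Sig.{u}) : Type u := Fm S 0

namespace Fm

def subst : {n m : ℕ} → (Fin n → Tm S m) → Fm S n → Fm S m
  | _, _, σ, .pred s p ts => .pred s p fun i => (ts i).subst σ
  | _, _, _, .bot => .bot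
  | _, _, σ, .and A B => .and (A.subst σ) (B.subst σ)
  | _, _, σ, .or A B => .or (A.subst σ) (B.subst σ)
  | _, _, σ, .imp A B => .imp (A.subst σ) (B.subst σ)
  | _, _, σ, .all A => .all (A.subst (Tm.lift σ))
  | _, _, σ, .ex A => .ex (A.subst (Tm.lift σ))

/-- `A(x/o)`, where `x` is the variable bound by the quantifier that has been stripped off. -/
def inst (A : Fm S 1) (o : Nom S) : Form S := A.subst fun _ => .free o

/-- The nominal term `o` occurs (free) in the formula. -/
def Occ (o : Nom S) : {n : ℕ} → Fm S n → Prop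
  | _, .pred _ _ ts => ∃ i, ts i = .free o
  | _, .bot => False
  | _, .and A B => A.Occ o ∨ B.Occ o
  | _, .or A B => A.Occ o ∨ B.Occ o
  | _, .imp A B => A.Occ o ∨ B.Occ o
  | _, .all A => A.Occ o
  | _, .ex A => A.Occ o

/-- `A ↔ B`. -/
def iff {n : ℕ} (A B : Fm S n) : Fm S n := .and (.imp A B) (.imp B A)

/-- `A₁ & … & Aₘ`; the empty conjunction is `⊥ ⊃ ⊥`. -/
def conj {n : ℕ} : List (Fm S n) → Fm S n
  | [] => .imp .bot .bot
  | [A] => A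
  | A :: B :: L => .and A (conj (B :: L))

/-- `∀z₁ … ∀zₖ A`. -/
def alls {n : ℕ} : (k : ℕ) → Fm S (n + k) → Fm S n
  | 0, A => A
  | k + 1, A => alls k (.all A)

/-- `φ z₁ … z_{j-1} o z_{j+1} … zₖ` (or its negative form), in the scope of `∀z₁ … ∀zₖ`. -/
def place {n : ℕ} (s : Sign) (p : S.Pred) (o : Tm S n) (j : Fin (S.arity p)) :
    Fm S (n + S.arity p) :=
  .pred s p fun i =>
    if i = j then o.shift (S.arity p) else .bound (i.rev.castLE (Nat.le_add_left _ _))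

/-- `P_φ(o₁, o₂)` for `s = pos`, `N_φ(o₁, o₂)` for `s = neg`: the universally quantified conjunction
of the biconditionals `φ(… o₁ …) ↔ φ(… o₂ …)` (resp. with `−φ`) over all argument places of `φ`. -/
def respect {n : ℕ} (s : Sign) (p : S.Pred) (o₁ o₂ : Tm S n) : Fm S n :=
  alls (S.arity p) (conj ((List.finRange (S.arity p)).map fun j =>
    iff (place s p o₁ j) (place s p o₂ j)))

/-- Qualified identity: `o₁ =⁺_Q o₂` for `s = pos`, `o₁ =⁻_Q o₂` for `s = neg`. -/
noncomputable def eq {n : ℕ} (s : Sign) (Q : Finset S.Pred) (o₁ o₂ : Tm S n) : Fm S n :=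
  conj (Q.toList.map fun p => respect s p o₁ o₂)

end Fm

/-- `φ(x)`: a predicate constant applied to terms and to at least one occurrence of `x` (written
`none`). -/
structure OnePlace (S : Sig.{u}) (n : ℕ) : Type u where
  pred : S.Pred
  args : Fin (S.arity pred) → Option (Tm S n)
  occurs : ∃ i, args i = none

namespace OnePlace

/-- `φ(t)` for `s = pos`, `−φ(t)` for `s = neg`. -/
def ap {n : ℕ} (φ : OnePlace S n) (s : Sign) (t : Tm S n) : Fm S n :=
  .pred s φ.pred fun i => (φ.args i).getD t

def shift {n : ℕ} (φ : OnePlace S n) (k : ℕ) : OnePlace S (n + k) where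
  pred := φ.pred
  args i := (φ.args i).map (Tm.shift k)
  occurs := φ.occurs.imp fun i h => by simp [h]

end OnePlace

namespace Fm

/-- The existence clause `∃x φ(x)` (`s = pos`) or `∃x −φ(x)` (`s = neg`). -/
def exCl {n : ℕ} (s : Sign) (φ : OnePlace S n) : Fm S n :=
  .ex ((φ.shift 1).ap s (.bound 0))

/-- The qualified uniqueness clause `∀u∀v((φ(u) & φ(v)) ⊃ u =⁺_Q v)`; for `s = neg` with `−φ`
and `=⁻_Q`. -/
noncomputable def uniqCl {n : ℕ} (s : Sign) (Q : Finset S.Pred) (φ : OnePlace S n) : Fm S n :=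
  .all (.all (.imp (.and ((φ.shift 2).ap s (.bound 1)) ((φ.shift 2).ap s (.bound 0)))
    (eq s Q (.bound 1) (.bound 0))))

/-- The predication clause `∀w(φ(w) ⊃ ψ(w))`; `s` is the mode of `φ` and `r` that of `ψ`. -/
def predCl {n : ℕ} (s r : Sign) (φ ψ : OnePlace S n) : Fm S n :=
  .all (.imp ((φ.shift 1).ap s (.bound 0)) ((ψ.shift 1).ap r (.bound 0)))

/-- Qualified definiteness: `ψ(ι_Q x φ(x))`, with `−φ` and `=⁻_Q` if `s = neg`, and with `−ψ` if
`r = neg`. -/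
noncomputable def iota {n : ℕ} (s r : Sign) (Q : Finset S.Pred) (φ ψ : OnePlace S n) : Fm S n :=
  .and (exCl s φ) (.and (uniqCl s Q φ) (predCl s r φ ψ))

end Fm

/-! ### Subatomic bases and units -/

/-- Atomic sentences `φ α₁ … αₙ`. -/
structure Atm (S : Sig.{u}) : Type u where
  pred : S.Pred
  args : Fin (S.arity pred) → S.Const

namespace Atm

/-- The atomic sentence contains the non-logical constant. -/
def Has (A : Atm S) : NonLog S → Prop
  | .inl c => ∃ i, A.args i = c
  | .inr p => A.pred = p

/-- The atomic sentence (`pos`), or the corresponding negative predication (`neg`). -/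
def form (A : Atm S) (s : Sign) : Form S := .pred s A.pred fun i => .free (.const (A.args i))

end Atm

/-- A subatomic base: every non-logical constant `τ` is assigned a set `τΓ` of atomic sentences
containing `τ`. -/
structure Base (S : Sig.{u}) : Type u where
  val : NonLog S → Set (Atm S)
  sub : ∀ τ, ∀ A ∈ val τ, A.Has τ

/-- The side condition of `asI` (`pos`) and of `−asI` (`neg`): the atomic sentence `φ α₁ … αₙ` is,
resp. is not, in `φΓ ∩ α₁Γ ∩ … ∩ αₙΓ`. -/
def Base.Side (v : Base S) (A : Atm S) : Sign → Prop
  | .pos => ∀ τ, A.Has τ → A ∈ v.val τ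
  | .neg => ¬ ∀ τ, A.Has τ → A ∈ v.val τ

/-- Units: formulae and term assumptions `τΓ`.  A term assumption is recorded by its non-logical
constant `τ`, so that `ta τ` serves both as the unit `τΓ` and as the expression `τ`. -/
inductive Un (S : Sig.{u}) : Type u where
  | fm (A : Form S)
  | ta (τ : NonLog S)

/-- The nominal term `o` occurs in the unit; in a term assumption only if the latter is `oΓ`. -/
def Un.Occ (o : Nom S) : Un S → Prop
  | .fm A => A.Occ o
  | .ta (.inl c) => o = .const c
  | .ta (.inr _) => False

/-- The subexpression relation: a formula has as immediate subexpressions its immediate subformulae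
(for quantified formulae all the instances), and a predication `φ o₁ … oₙ` or `−φ o₁ … oₙ` has the
non-logical constants occurring in it. -/
inductive Subexpr : Un S → Un S → Prop where
  | refl (U : Un S) : Subexpr U U
  | andL {U : Un S} {A B : Form S} : Subexpr U (.fm A) → Subexpr U (.fm (.and A B))
  | andR {U : Un S} {A B : Form S} : Subexpr U (.fm B) → Subexpr U (.fm (.and A B))
  | orL {U : Un S} {A B : Form S} : Subexpr U (.fm A) → Subexpr U (.fm (.or A B))
  | orR {U : Un S} {A B : Form S} : Subexpr U (.fm B) → Subexpr U (.fm (.or A B))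
  | impL {U : Un S} {A B : Form S} : Subexpr U (.fm A) → Subexpr U (.fm (.imp A B))
  | impR {U : Un S} {A B : Form S} : Subexpr U (.fm B) → Subexpr U (.fm (.imp A B))
  | all {U : Un S} {A : Fm S 1} (o : Nom S) : Subexpr U (.fm (A.inst o)) → Subexpr U (.fm (.all A))
  | ex {U : Un S} {A : Fm S 1} (o : Nom S) : Subexpr U (.fm (A.inst o)) → Subexpr U (.fm (.ex A))
  | predConst (s : Sign) (p : S.Pred) (ts : Fin (S.arity p) → Tm S 0) :
      Subexpr (.ta (.inr p)) (.fm (.pred s p ts))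
  | nomConst (s : Sign) (p : S.Pred) (ts : Fin (S.arity p) → Tm S 0) (c : S.Const)
      (h : ∃ i, ts i = .free (.const c)) : Subexpr (.ta (.inl c)) (.fm (.pred s p ts))

/-! ### Derivations -/

/-- A pair of mirror atomic sentences `φ(a)`, `φ(b)` with `φ ∈ Q`: they are exactly alike, except
that `φ(a)` has `a` where `φ(b)` has `b`, and vice versa; and `φ(a)` does contain `a`. -/
structure Mirror (Q : Finset S.Pred) (a b : S.Const) : Type u where
  pred : S.Pred
  mem : pred ∈ Q
  left : Fin (S.arity pred) → S.Const
  right : Fin (S.arity pred) → S.Const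
  occurs : ∃ i, left i = a
  fst : ∀ i, left i = a → right i = b
  snd : ∀ i, left i = b → right i = a
  alike : ∀ i, left i ≠ a → left i ≠ b → right i = left i

namespace Mirror

variable {Q : Finset S.Pred} {a b : S.Const}

/-- `φ(a)`, resp. `−φ(a)`. -/
def lhs (m : Mirror Q a b) (s : Sign) : Form S := Atm.form ⟨m.pred, m.left⟩ s

/-- `φ(b)`, resp. `−φ(b)`. -/
def rhs (m : Mirror Q a b) (s : Sign) : Form S := Atm.form ⟨m.pred, m.right⟩ s

end Mirror

/-- `Deriv v H U` is the type of the derivations of the unit `U`, in the `I0(S⁼_b)ι`-system over the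
subatomic base `v`, whose set of open assumptions is `H`.  Assumptions carry labels: a rule that
discharges the formula `A` with label `l` closes all the assumptions of `A` with that label.  Term
assumptions are never discharged. -/
inductive Deriv (v : Base S) : Set (ℕ × Un S) → Un S → Type u where
  | hyp (l : ℕ) (U : Un S) : Deriv v {(l, U)} U
  -- Intuitionistic logic.
  | botE {H} (A : Form S) (D : Deriv v H (.fm .bot)) : Deriv v H (.fm A)
  | andI {H₁ H₂} {A B : Form S} (D₁ : Deriv v H₁ (.fm A)) (D₂ : Deriv v H₂ (.fm B)) :
      Deriv v (H₁ ∪ H₂) (.fm (.and A B))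
  | andE1 {H} {A B : Form S} (D : Deriv v H (.fm (.and A B))) : Deriv v H (.fm A)
  | andE2 {H} {A B : Form S} (D : Deriv v H (.fm (.and A B))) : Deriv v H (.fm B)
  | orI1 {H} {A : Form S} (B : Form S) (D : Deriv v H (.fm A)) : Deriv v H (.fm (.or A B))
  | orI2 {H} (A : Form S) {B : Form S} (D : Deriv v H (.fm B)) : Deriv v H (.fm (.or A B))
  -- In `∨E` and `∃E`, the unit `C` may be a term assumption.
  | orE {H₁ H₂ H₃} {A B : Form S} {C : Un S} (l : ℕ) (D₁ : Deriv v H₁ (.fm (.or A B)))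
      (D₂ : Deriv v H₂ C) (D₃ : Deriv v H₃ C) :
      Deriv v (H₁ ∪ (H₂ \ {(l, .fm A)}) ∪ (H₃ \ {(l, .fm B)})) C
  | impI {H} (A : Form S) {B : Form S} (l : ℕ) (D : Deriv v H (.fm B)) :
      Deriv v (H \ {(l, .fm A)}) (.fm (.imp A B))
  | impE {H₁ H₂} {A B : Form S} (D₁ : Deriv v H₁ (.fm (.imp A B))) (D₂ : Deriv v H₂ (.fm A)) :
      Deriv v (H₁ ∪ H₂) (.fm B)
  -- `∀I` with a variable or a nominal constant `o` as eigenterm.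
  | allI {H} (A : Fm S 1) (o : Nom S) (D : Deriv v H (.fm (A.inst o)))
      (h₁ : ∀ x ∈ H, ¬ x.2.Occ o) (h₂ : ¬ A.Occ o) : Deriv v H (.fm (.all A))
  -- `∀I` with a premiss for every nominal constant.
  | allIω {H : S.Const → Set (ℕ × Un S)} (A : Fm S 1)
      (D : ∀ c, Deriv v (H c) (.fm (A.inst (.const c)))) : Deriv v (⋃ c, H c) (.fm (.all A))
  | allE {H} {A : Fm S 1} (o : Nom S) (D : Deriv v H (.fm (.all A))) : Deriv v H (.fm (A.inst o))
  | exI {H} (A : Fm S 1) (o : Nom S) (D : Deriv v H (.fm (A.inst o))) : Deriv v H (.fm (.ex A))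
  | exE {H₁ H₂} {A : Fm S 1} {C : Un S} (l : ℕ) (o : Nom S) (D₁ : Deriv v H₁ (.fm (.ex A)))
      (D₂ : Deriv v H₂ C) (h₁ : ∀ x ∈ H₂ \ {(l, .fm (A.inst o))}, ¬ x.2.Occ o)
      (h₂ : ¬ A.Occ o) (h₃ : ¬ C.Occ o) :
      Deriv v (H₁ ∪ (H₂ \ {(l, .fm (A.inst o))})) C
  -- Subatomic rules: `asI`, `asE` for `s = pos`; `−asI`, `−asE` for `s = neg`.
  | asI {H : Set (ℕ × Un S)} (s : Sign) (A : Atm S) {H' : Fin (S.arity A.pred) → Set (ℕ × Un S)}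
      (D : Deriv v H (.ta (.inr A.pred))) (D' : ∀ i, Deriv v (H' i) (.ta (.inl (A.args i))))
      (h : v.Side A s) : Deriv v (H ∪ ⋃ i, H' i) (.fm (A.form s))
  | asE {H} (s : Sign) (A : Atm S) (τ : NonLog S) (h : A.Has τ) (D : Deriv v H (.fm (A.form s))) :
      Deriv v H (.ta τ)
  -- Qualified identity, `=⁺_Q` for `s = pos` and `=⁻_Q` for `s = neg`; in the introduction rule
  -- there are two premisses for every pair of mirror atomic sentences.
  | eqI (s : Sign) (Q : Finset S.Pred) (a b : S.Const) {H₁ H₂ : Mirror Q a b → Set (ℕ × Un S)}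
      (l : ℕ) (D₁ : ∀ m, Deriv v (H₁ m) (.fm (m.rhs s))) (D₂ : ∀ m, Deriv v (H₂ m) (.fm (m.lhs s))) :
      Deriv v ((⋃ m, H₁ m \ {(l, .fm (m.lhs s))}) ∪ ⋃ m, H₂ m \ {(l, .fm (m.rhs s))})
        (.fm (Fm.eq s Q (.free (.const a)) (.free (.const b))))
  | eqE1 {H₁ H₂} (s : Sign) (Q : Finset S.Pred) (a b : S.Const) (m : Mirror Q a b)
      (D₁ : Deriv v H₁ (.fm (Fm.eq s Q (.free (.const a)) (.free (.const b)))))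
      (D₂ : Deriv v H₂ (.fm (m.lhs s))) : Deriv v (H₁ ∪ H₂) (.fm (m.rhs s))
  | eqE2 {H₁ H₂} (s : Sign) (Q : Finset S.Pred) (a b : S.Const) (m : Mirror Q a b)
      (D₁ : Deriv v H₁ (.fm (Fm.eq s Q (.free (.const a)) (.free (.const b)))))
      (D₂ : Deriv v H₂ (.fm (m.rhs s))) : Deriv v (H₁ ∪ H₂) (.fm (m.lhs s))
  -- Qualified definiteness, positive for `s = pos` and negative for `s = neg`.
  | iotaI {H₁ H₂ H₃} (s r : Sign) (Q : Finset S.Pred) (φ ψ : OnePlace S 0)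
      (D₁ : Deriv v H₁ (.fm (Fm.exCl s φ))) (D₂ : Deriv v H₂ (.fm (Fm.uniqCl s Q φ)))
      (D₃ : Deriv v H₃ (.fm (Fm.predCl s r φ ψ))) :
      Deriv v (H₁ ∪ H₂ ∪ H₃) (.fm (Fm.iota s r Q φ ψ))
  | iotaE1 {H} (s r : Sign) (Q : Finset S.Pred) (φ ψ : OnePlace S 0)
      (D : Deriv v H (.fm (Fm.iota s r Q φ ψ))) : Deriv v H (.fm (Fm.exCl s φ))
  | iotaE2 {H} (s r : Sign) (Q : Finset S.Pred) (φ ψ : OnePlace S 0)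
      (D : Deriv v H (.fm (Fm.iota s r Q φ ψ))) : Deriv v H (.fm (Fm.uniqCl s Q φ))
  | iotaE3 {H} (s r : Sign) (Q : Finset S.Pred) (φ ψ : OnePlace S 0)
      (D : Deriv v H (.fm (Fm.iota s r Q φ ψ))) : Deriv v H (.fm (Fm.predCl s r φ ψ))

namespace Deriv

variable {v : Base S}

/-- The unit derived. -/
def concl {H : Set (ℕ × Un S)} {U : Un S} (_ : Deriv v H U) : Un S := U

/-- The units occurring in a derivation (as conclusions of its subderivations). -/
def units : {H : Set (ℕ × Un S)} → {U : Un S} → Deriv v H U → Set (Un S)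
  | _, _, d@(.hyp _ _) => {d.concl}
  | _, _, d@(.botE _ D) => {d.concl} ∪ D.units
  | _, _, d@(.andI D₁ D₂) => {d.concl} ∪ D₁.units ∪ D₂.units
  | _, _, d@(.andE1 D) => {d.concl} ∪ D.units
  | _, _, d@(.andE2 D) => {d.concl} ∪ D.units
  | _, _, d@(.orI1 _ D) => {d.concl} ∪ D.units
  | _, _, d@(.orI2 _ D) => {d.concl} ∪ D.units
  | _, _, d@(.orE _ D₁ D₂ D₃) => {d.concl} ∪ D₁.units ∪ D₂.units ∪ D₃.units
  | _, _, d@(.impI _ _ D) => {d.concl} ∪ D.units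
  | _, _, d@(.impE D₁ D₂) => {d.concl} ∪ D₁.units ∪ D₂.units
  | _, _, d@(.allI _ _ D _ _) => {d.concl} ∪ D.units
  | _, _, d@(.allIω _ D) => {d.concl} ∪ ⋃ c, (D c).units
  | _, _, d@(.allE _ D) => {d.concl} ∪ D.units
  | _, _, d@(.exI _ _ D) => {d.concl} ∪ D.units
  | _, _, d@(.exE _ _ D₁ D₂ _ _ _) => {d.concl} ∪ D₁.units ∪ D₂.units
  | _, _, d@(.asI _ _ D D' _) => {d.concl} ∪ D.units ∪ ⋃ i, (D' i).units
  | _, _, d@(.asE _ _ _ _ D) => {d.concl} ∪ D.units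
  | _, _, d@(.eqI _ _ _ _ _ D₁ D₂) => {d.concl} ∪ (⋃ m, (D₁ m).units) ∪ ⋃ m, (D₂ m).units
  | _, _, d@(.eqE1 _ _ _ _ _ D₁ D₂) => {d.concl} ∪ D₁.units ∪ D₂.units
  | _, _, d@(.eqE2 _ _ _ _ _ D₁ D₂) => {d.concl} ∪ D₁.units ∪ D₂.units
  | _, _, d@(.iotaI _ _ _ _ _ D₁ D₂ D₃) => {d.concl} ∪ D₁.units ∪ D₂.units ∪ D₃.units
  | _, _, d@(.iotaE1 _ _ _ _ _ D) => {d.concl} ∪ D.units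
  | _, _, d@(.iotaE2 _ _ _ _ _ D) => {d.concl} ∪ D.units
  | _, _, d@(.iotaE3 _ _ _ _ _ D) => {d.concl} ∪ D.units

/-- The last step is an application of an introduction rule. -/
def EndsInIntro : {H : Set (ℕ × Un S)} → {U : Un S} → Deriv v H U → Prop
  | _, _, .andI _ _ => True
  | _, _, .orI1 _ _ => True
  | _, _, .orI2 _ _ => True
  | _, _, .impI _ _ _ => True
  | _, _, .allI _ _ _ _ _ => True
  | _, _, .allIω _ _ => True
  | _, _, .exI _ _ _ => True
  | _, _, .asI _ _ _ _ _ => True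
  | _, _, .eqI _ _ _ _ _ _ _ => True
  | _, _, .iotaI _ _ _ _ _ _ _ _ => True
  | _, _, _ => False

/-- The last step is an application of `⊥i`. -/
def EndsInBot : {H : Set (ℕ × Un S)} → {U : Un S} → Deriv v H U → Prop
  | _, _, .botE _ _ => True
  | _, _, _ => False

/-- The last step is an application of `∨E` or of `∃E`. -/
def EndsInOrEx : {H : Set (ℕ × Un S)} → {U : Un S} → Deriv v H U → Prop
  | _, _, .orE _ _ _ _ => True
  | _, _, .exE _ _ _ _ _ _ _ => True
  | _, _, _ => False

/-- The condition on the derivation `D` of the major premiss of an elimination rule: that premiss is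
not a maximal formula, i.e. not the conclusion of an introduction rule or of `⊥i` (no detour), and
not the conclusion of `∨E` or `∃E` (no permutative detour).  The shape of the premiss makes an
introduction rule that concludes it one for the same formula; as qualified identity and qualified
definiteness sentences are abbreviations, this includes their rules next to those for the logical
constants. -/
def MajorOk {H : Set (ℕ × Un S)} {U : Un S} (D : Deriv v H U) : Prop :=
  ¬ D.EndsInIntro ∧ ¬ D.EndsInBot ∧ ¬ D.EndsInOrEx

/-- Normal derivations: every major premiss of an elimination rule meets the condition above, and
every application of `∨E` or `∃E` discharges an assumption above each of its minor premisses (no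
simplifiable detour). -/
def Normal : {H : Set (ℕ × Un S)} → {U : Un S} → Deriv v H U → Prop
  | _, _, .hyp _ _ => True
  | _, _, .botE _ D => D.Normal
  | _, _, .andI D₁ D₂ => D₁.Normal ∧ D₂.Normal
  | _, _, .andE1 D => D.MajorOk ∧ D.Normal
  | _, _, .andE2 D => D.MajorOk ∧ D.Normal
  | _, _, .orI1 _ D => D.Normal
  | _, _, .orI2 _ D => D.Normal
  | _, _, .orE (H₂ := H₂) (H₃ := H₃) (A := A) (B := B) l D₁ D₂ D₃ =>
      D₁.MajorOk ∧ ((l, .fm A) ∈ H₂ ∧ (l, .fm B) ∈ H₃) ∧ D₁.Normal ∧ D₂.Normal ∧ D₃.Normal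
  | _, _, .impI _ _ D => D.Normal
  | _, _, .impE D₁ D₂ => D₁.MajorOk ∧ D₁.Normal ∧ D₂.Normal
  | _, _, .allI _ _ D _ _ => D.Normal
  | _, _, .allIω _ D => ∀ c, (D c).Normal
  | _, _, .allE _ D => D.MajorOk ∧ D.Normal
  | _, _, .exI _ _ D => D.Normal
  | _, _, .exE (H₂ := H₂) (A := A) l o D₁ D₂ _ _ _ =>
      D₁.MajorOk ∧ (l, .fm (A.inst o)) ∈ H₂ ∧ D₁.Normal ∧ D₂.Normal
  | _, _, .asI _ _ D D' _ => D.Normal ∧ ∀ i, (D' i).Normal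
  | _, _, .asE _ _ _ _ D => D.MajorOk ∧ D.Normal
  | _, _, .eqI _ _ _ _ _ D₁ D₂ => (∀ m, (D₁ m).Normal) ∧ ∀ m, (D₂ m).Normal
  | _, _, .eqE1 _ _ _ _ _ D₁ D₂ => D₁.MajorOk ∧ D₁.Normal ∧ D₂.Normal
  | _, _, .eqE2 _ _ _ _ _ D₁ D₂ => D₁.MajorOk ∧ D₁.Normal ∧ D₂.Normal
  | _, _, .iotaI _ _ _ _ _ D₁ D₂ D₃ => D₁.Normal ∧ D₂.Normal ∧ D₃.Normal
  | _, _, .iotaE1 _ _ _ _ _ D => D.MajorOk ∧ D.Normal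
  | _, _, .iotaE2 _ _ _ _ _ D => D.MajorOk ∧ D.Normal
  | _, _, .iotaE3 _ _ _ _ _ D => D.MajorOk ∧ D.Normal

end Deriv

end QDef

namespace QDef

variable {S : Sig.{u}}

/-! ### Substitution -/

theorem Tm.shift_one_subst_lift {n m : ℕ} (σ : Fin n → Tm S m) (t : Tm S n) :
    (t.shift 1).subst (Tm.lift σ) = (t.subst σ).shift 1 := by
  cases t <;> rfl

theorem Tm.lift_subst_lift {n m k : ℕ} (σ : Fin n → Tm S m) (ρ : Fin m → Tm S k) :
    (fun i => (Tm.lift σ i).subst (Tm.lift ρ)) = Tm.lift fun i => (σ i).subst ρ := by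
  funext i
  refine Fin.cases rfl (fun i => ?_) i
  exact Tm.shift_one_subst_lift ρ (σ i)

theorem Tm.subst_subst {n m k : ℕ} (σ : Fin n → Tm S m) (ρ : Fin m → Tm S k) (t : Tm S n) :
    (t.subst σ).subst ρ = t.subst fun i => (σ i).subst ρ := by
  cases t <;> rfl

theorem Fm.subst_subst {n : ℕ} (A : Fm S n) : ∀ {m k : ℕ} (σ : Fin n → Tm S m)
    (ρ : Fin m → Tm S k), (A.subst σ).subst ρ = A.subst fun i => (σ i).subst ρ := by
  induction A with
  | pred s p ts => intros; simp only [Fm.subst, Tm.subst_subst]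
  | bot => intros; rfl
  | and A B ihA ihB => intros; simp only [Fm.subst, ihA, ihB]
  | or A B ihA ihB => intros; simp only [Fm.subst, ihA, ihB]
  | imp A B ihA ihB => intros; simp only [Fm.subst, ihA, ihB]
  | all A ih => intros; simp only [Fm.subst, ih, Tm.lift_subst_lift]
  | ex A ih => intros; simp only [Fm.subst, ih, Tm.lift_subst_lift]

theorem Tm.lift_bound {n : ℕ} : Tm.lift (Tm.bound (S := S) (n := n)) = Tm.bound := by
  funext i
  exact Fin.cases rfl (fun _ => rfl) i

theorem Fm.subst_bound {n : ℕ} (A : Fm S n) : A.subst Tm.bound = A := by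
  induction A with
  | pred s p ts =>
    simp only [Fm.subst]
    congr 1
    funext i
    cases ts i <;> rfl
  | bot => rfl
  | and A B ihA ihB => simp only [Fm.subst, ihA, ihB]
  | or A B ihA ihB => simp only [Fm.subst, ihA, ihB]
  | imp A B ihA ihB => simp only [Fm.subst, ihA, ihB]
  | all A ih => simp only [Fm.subst, Tm.lift_bound, ih]
  | ex A ih => simp only [Fm.subst, Tm.lift_bound, ih]

theorem Fm.subst_lift_inst {n : ℕ} (A : Fm S (n + 1)) (σ : Fin (n + 1) → Tm S 0) (o : Nom S)
    (ho : σ 0 = .free o) : (A.subst (Tm.lift fun i => σ i.succ)).inst o = A.subst σ := by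
  rw [Fm.inst, Fm.subst_subst]
  congr 1
  funext i
  refine Fin.cases ho.symm (fun i => ?_) i
  change ((σ i.succ).shift 1).subst _ = _
  rcases σ i.succ with o | j
  · rfl
  · exact j.elim0

theorem Fm.subst_conj {n m : ℕ} (σ : Fin n → Tm S m) (L : List (Fm S n)) :
    (Fm.conj L).subst σ = Fm.conj (L.map (Fm.subst σ)) := by
  induction L with
  | nil => rfl
  | cons A L ih =>
    cases L with
    | nil => rfl
    | cons B L => exact congrArg (Fm.and (A.subst σ)) ih

/-! ### The subexpression relation -/

theorem Subexpr.trans {U V W : Un S} (h : Subexpr U V) (h' : Subexpr V W) : Subexpr U W := by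
  induction h' with
  | refl => exact h
  | andL _ ih => exact .andL (ih h)
  | andR _ ih => exact .andR (ih h)
  | orL _ ih => exact .orL (ih h)
  | orR _ ih => exact .orR (ih h)
  | impL _ ih => exact .impL (ih h)
  | impR _ ih => exact .impR (ih h)
  | all o _ ih => exact .all o (ih h)
  | ex o _ ih => exact .ex o (ih h)
  | predConst s p ts => cases h; exact .predConst s p ts
  | nomConst s p ts c hc => cases h; exact .nomConst s p ts c hc

theorem Subexpr.conj {A : Form S} {L : List (Form S)} (h : A ∈ L) :
    Subexpr (.fm A) (.fm (Fm.conj L)) := by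
  induction L with
  | nil => cases h
  | cons B L ih =>
    cases L with
    | nil => rw [List.mem_singleton.1 h]; exact .refl _
    | cons C L =>
      rcases List.mem_cons.1 h with rfl | h
      · exact .andL (.refl _)
      · exact .andR (ih h)

theorem Subexpr.alls {k : ℕ} (A : Fm S (0 + k)) (σ : Fin (0 + k) → Tm S 0) :
    Subexpr (.fm (A.subst σ)) (.fm (Fm.alls k A)) := by
  induction k with
  | zero =>
    have : A.subst σ = A := by
      have hσ : σ = Tm.bound := funext fun i => i.elim0
      subst hσ
      exact Fm.subst_bound A
    rw [this]; exact .refl _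
  | succ k ih =>
    refine Subexpr.trans ?_ (ih (.all A) fun i => σ i.succ)
    rcases ho : σ 0 with o | j
    · refine .all o ?_
      exact Fm.subst_lift_inst A σ o ho ▸ .refl _
    · exact j.elim0

theorem Subexpr.atm {A : Atm S} {s : Sign} {τ : NonLog S} (h : A.Has τ) :
    Subexpr (.ta τ) (.fm (A.form s)) := by
  rcases τ with c | p
  · obtain ⟨i, rfl⟩ := h
    exact .nomConst _ _ _ _ ⟨i, rfl⟩
  · cases h
    exact .predConst _ _ _

theorem Fm.place_subst (s : Sign) (p : S.Pred) (a : S.Const) (j : Fin (S.arity p))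
    (f : Fin (S.arity p) → S.Const) (hf : f j = a) :
    (Fm.place s p (.free (.const a) : Tm S 0) j).subst
      (fun i => .free (.const (f (i.cast (Nat.zero_add _)).rev))) = Atm.form ⟨p, f⟩ s := by
  subst hf
  simp only [Fm.place, Fm.subst, Atm.form]
  congr 1
  funext i
  by_cases h : i = j
  · subst h; simp [Tm.shift, Tm.subst]
  · simp only [h, if_false, Tm.subst]
    congr 3
    ext; simp

theorem Subexpr.respect (s : Sign) (p : S.Pred) (a b : S.Const) (j : Fin (S.arity p))
    (f : Fin (S.arity p) → S.Const) (hf : f j = a ∨ f j = b) :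
    Subexpr (.fm (Atm.form ⟨p, f⟩ s))
      (.fm (Fm.respect s p (.free (.const a) : Tm S 0) (.free (.const b)))) := by
  refine Subexpr.trans ?_ (Subexpr.alls _ fun i => .free (.const (f (i.cast (Nat.zero_add _)).rev)))
  rw [Fm.subst_conj, List.map_map]
  refine Subexpr.trans ?_ (Subexpr.conj (List.mem_map_of_mem (List.mem_finRange j)))
  refine .andL ?_
  rcases hf with hf | hf
  · refine .impL ?_
    rw [Fm.place_subst s p a j f hf]; exact .refl _
  · refine .impR ?_
    rw [Fm.place_subst s p b j f hf]; exact .refl _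

theorem Subexpr.respect_eq (s : Sign) {Q : Finset S.Pred} {p : S.Pred} (hp : p ∈ Q)
    (o₁ o₂ : Tm S 0) : Subexpr (.fm (Fm.respect s p o₁ o₂)) (.fm (Fm.eq s Q o₁ o₂)) :=
  Subexpr.conj (List.mem_map.2 ⟨p, Finset.mem_toList.2 hp, rfl⟩)

theorem Mirror.lhs_subexpr {Q : Finset S.Pred} {a b : S.Const} (m : Mirror Q a b) (s : Sign) :
    Subexpr (.fm (m.lhs s)) (.fm (Fm.eq s Q (.free (.const a)) (.free (.const b)))) := by
  obtain ⟨j, hj⟩ := m.occurs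
  exact (Subexpr.respect s m.pred a b j m.left (.inl hj)).trans (.respect_eq s m.mem _ _)

theorem Mirror.rhs_subexpr {Q : Finset S.Pred} {a b : S.Const} (m : Mirror Q a b) (s : Sign) :
    Subexpr (.fm (m.rhs s)) (.fm (Fm.eq s Q (.free (.const a)) (.free (.const b)))) := by
  obtain ⟨j, hj⟩ := m.occurs
  exact (Subexpr.respect s m.pred a b j m.right (.inr (m.fst j hj))).trans
    (.respect_eq s m.mem _ _)

theorem Fm.conj_ne_bot {n : ℕ} {L : List (Fm S n)} (h : ∀ A ∈ L, A ≠ .bot) :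
    Fm.conj L ≠ .bot := by
  match L with
  | [] => exact nofun
  | [A] => exact h A (List.mem_singleton.2 rfl)
  | _ :: _ :: _ => exact nofun

theorem Fm.alls_ne_bot {n k : ℕ} {A : Fm S (n + k)} (h : A ≠ .bot) : Fm.alls k A ≠ .bot := by
  induction k with
  | zero => exact h
  | succ k ih => exact ih nofun

theorem Fm.eq_ne_bot {n : ℕ} (s : Sign) (Q : Finset S.Pred) (o₁ o₂ : Tm S n) :
    Fm.eq s Q o₁ o₂ ≠ .bot := by
  refine Fm.conj_ne_bot fun A hA => ?_
  obtain ⟨p, -, rfl⟩ := List.mem_map.1 hA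
  refine Fm.alls_ne_bot (Fm.conj_ne_bot fun A hA => ?_)
  obtain ⟨j, -, rfl⟩ := List.mem_map.1 hA
  exact nofun

/-! ### Normal derivations -/

theorem forall_mem_of_diff {H : Set (ℕ × Un S)} {T : Set (Un S)} {l : ℕ} {V : Un S} (hV : V ∈ T)
    (h : ∀ x ∈ H \ {(l, V)}, x.2 ∈ T) : ∀ x ∈ H, x.2 ∈ T := by
  intro x hx
  by_cases hxV : x = (l, V)
  · exact hxV ▸ hV
  · exact h x ⟨hx, hxV⟩

/-- Let `T` be closed under subexpressions and contain the open assumptions of a normal derivation.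
If the derivation meets the condition on major premisses, or derives `⊥`, then its conclusion is in
`T`; and as soon as its conclusion is in `T`, so are all its units. -/
theorem Deriv.Normal.units_subset {v : Base S} {T : Set (Un S)}
    (hT : ∀ {V W}, Subexpr W V → V ∈ T → W ∈ T) {H : Set (ℕ × Un S)} {U : Un S}
    {D : Deriv v H U} (hD : D.Normal) (hH : ∀ x ∈ H, x.2 ∈ T) :
    (D.MajorOk ∨ U = .fm .bot → U ∈ T) ∧ (U ∈ T → D.units ⊆ T) := by
  induction D with
  | hyp l U =>
    have hU : U ∈ T := hH (l, U) rfl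
    exact ⟨fun _ => hU, fun _ => Set.singleton_subset_iff.2 hU⟩
  | botE A D ih =>
    have ⟨h, h'⟩ := ih hD hH
    have hb := h (.inr rfl)
    refine ⟨fun hU => ?_, fun hU => Set.union_subset (Set.singleton_subset_iff.2 hU) (h' hb)⟩
    rcases hU with hU | hU
    · exact (hU.2.1 trivial).elim
    · exact hU ▸ hb
  | andI D₁ D₂ ih₁ ih₂ =>
    refine ⟨fun hU => hU.elim (fun h => (h.1 trivial).elim) nofun, fun hU => ?_⟩
    refine Set.union_subset (Set.union_subset (Set.singleton_subset_iff.2 hU) ?_) ?_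
    · exact (ih₁ hD.1 fun x hx => hH x (.inl hx)).2 (hT (.andL (.refl _)) hU)
    · exact (ih₂ hD.2 fun x hx => hH x (.inr hx)).2 (hT (.andR (.refl _)) hU)
  | andE1 D ih =>
    have ⟨h, h'⟩ := ih hD.2 hH
    have hM := h (.inl hD.1)
    have hU := hT (.andL (.refl _)) hM
    exact ⟨fun _ => hU, fun _ => Set.union_subset (Set.singleton_subset_iff.2 hU) (h' hM)⟩
  | andE2 D ih =>
    have ⟨h, h'⟩ := ih hD.2 hH
    have hM := h (.inl hD.1)
    have hU := hT (.andR (.refl _)) hM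
    exact ⟨fun _ => hU, fun _ => Set.union_subset (Set.singleton_subset_iff.2 hU) (h' hM)⟩
  | orI1 B D ih =>
    refine ⟨fun hU => hU.elim (fun h => (h.1 trivial).elim) nofun, fun hU => ?_⟩
    exact Set.union_subset (Set.singleton_subset_iff.2 hU)
      ((ih hD hH).2 (hT (.orL (.refl _)) hU))
  | orI2 A D ih =>
    refine ⟨fun hU => hU.elim (fun h => (h.1 trivial).elim) nofun, fun hU => ?_⟩
    exact Set.union_subset (Set.singleton_subset_iff.2 hU)
      ((ih hD hH).2 (hT (.orR (.refl _)) hU))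
  | orE l D₁ D₂ D₃ ih₁ ih₂ ih₃ =>
    obtain ⟨hM, -, hD₁, hD₂, hD₃⟩ := hD
    have ⟨h₁, h₁'⟩ := ih₁ hD₁ fun x hx => hH x (.inl (.inl hx))
    have hor := h₁ (.inl hM)
    have ⟨h₂, h₂'⟩ := ih₂ hD₂ (forall_mem_of_diff (hT (.orL (.refl _)) hor)
      fun x hx => hH x (.inl (.inr hx)))
    have ⟨_, h₃'⟩ := ih₃ hD₃ (forall_mem_of_diff (hT (.orR (.refl _)) hor)
      fun x hx => hH x (.inr hx))
    refine ⟨fun hU => hU.elim (fun h => (h.2.2 trivial).elim) fun h => h₂ (.inr h), fun hU => ?_⟩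
    exact Set.union_subset (Set.union_subset (Set.union_subset (Set.singleton_subset_iff.2 hU)
      (h₁' hor)) (h₂' hU)) (h₃' hU)
  | impI A l D ih =>
    refine ⟨fun hU => hU.elim (fun h => (h.1 trivial).elim) nofun, fun hU => ?_⟩
    exact Set.union_subset (Set.singleton_subset_iff.2 hU)
      ((ih hD (forall_mem_of_diff (hT (.impL (.refl _)) hU) hH)).2 (hT (.impR (.refl _)) hU))
  | impE D₁ D₂ ih₁ ih₂ =>
    have ⟨h₁, h₁'⟩ := ih₁ hD.2.1 fun x hx => hH x (.inl hx)
    have ⟨_, h₂'⟩ := ih₂ hD.2.2 fun x hx => hH x (.inr hx)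
    have hM := h₁ (.inl hD.1)
    have hU := hT (.impR (.refl _)) hM
    exact ⟨fun _ => hU, fun _ => Set.union_subset (Set.union_subset
      (Set.singleton_subset_iff.2 hU) (h₁' hM)) (h₂' (hT (.impL (.refl _)) hM))⟩
  | allI A o D _ _ ih =>
    refine ⟨fun hU => hU.elim (fun h => (h.1 trivial).elim) nofun, fun hU => ?_⟩
    exact Set.union_subset (Set.singleton_subset_iff.2 hU)
      ((ih hD hH).2 (hT (.all o (.refl _)) hU))
  | allIω A D ih =>
    refine ⟨fun hU => hU.elim (fun h => (h.1 trivial).elim) nofun, fun hU => ?_⟩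
    exact Set.union_subset (Set.singleton_subset_iff.2 hU) (Set.iUnion_subset fun c =>
      (ih c (hD c) fun x hx => hH x (Set.mem_iUnion.2 ⟨c, hx⟩)).2
        (hT (.all (.const c) (.refl _)) hU))
  | allE o D ih =>
    have ⟨h, h'⟩ := ih hD.2 hH
    have hM := h (.inl hD.1)
    have hU := hT (.all o (.refl _)) hM
    exact ⟨fun _ => hU, fun _ => Set.union_subset (Set.singleton_subset_iff.2 hU) (h' hM)⟩
  | exI A o D ih =>
    refine ⟨fun hU => hU.elim (fun h => (h.1 trivial).elim) nofun, fun hU => ?_⟩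
    exact Set.union_subset (Set.singleton_subset_iff.2 hU)
      ((ih hD hH).2 (hT (.ex o (.refl _)) hU))
  | exE l o D₁ D₂ _ _ _ ih₁ ih₂ =>
    obtain ⟨hM, -, hD₁, hD₂⟩ := hD
    have ⟨h₁, h₁'⟩ := ih₁ hD₁ fun x hx => hH x (.inl hx)
    have hex := h₁ (.inl hM)
    have ⟨h₂, h₂'⟩ := ih₂ hD₂ (forall_mem_of_diff (hT (.ex o (.refl _)) hex)
      fun x hx => hH x (.inr hx))
    refine ⟨fun hU => hU.elim (fun h => (h.2.2 trivial).elim) fun h => h₂ (.inr h), fun hU => ?_⟩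
    exact Set.union_subset (Set.union_subset (Set.singleton_subset_iff.2 hU) (h₁' hex)) (h₂' hU)
  | asI s A D D' _ ih ih' =>
    refine ⟨fun hU => hU.elim (fun h => (h.1 trivial).elim) nofun, fun hU => ?_⟩
    refine Set.union_subset (Set.union_subset (Set.singleton_subset_iff.2 hU) ?_)
      (Set.iUnion_subset fun i => ?_)
    · exact (ih hD.1 fun x hx => hH x (.inl hx)).2 (hT (.atm (A := A) rfl) hU)
    · exact (ih' i (hD.2 i) fun x hx => hH x (.inr (Set.mem_iUnion.2 ⟨i, hx⟩))).2
        (hT (.atm (A := A) ⟨i, rfl⟩) hU)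
  | asE s A τ hτ D ih =>
    have ⟨h, h'⟩ := ih hD.2 hH
    have hM := h (.inl hD.1)
    have hU := hT (.atm hτ) hM
    exact ⟨fun _ => hU, fun _ => Set.union_subset (Set.singleton_subset_iff.2 hU) (h' hM)⟩
  | eqI s Q a b l D₁ D₂ ih₁ ih₂ =>
    refine ⟨fun hU => hU.elim (fun h => (h.1 trivial).elim)
      fun h => (Fm.eq_ne_bot _ _ _ _ (Un.fm.inj h)).elim, fun hU => ?_⟩
    have hl (m : Mirror Q a b) := hT (m.lhs_subexpr s) hU
    have hr (m : Mirror Q a b) := hT (m.rhs_subexpr s) hU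
    refine Set.union_subset (Set.union_subset (Set.singleton_subset_iff.2 hU)
      (Set.iUnion_subset fun m => ?_)) (Set.iUnion_subset fun m => ?_)
    · exact (ih₁ m (hD.1 m) (forall_mem_of_diff (hl m)
        fun x hx => hH x (.inl (Set.mem_iUnion.2 ⟨m, hx⟩)))).2 (hr m)
    · exact (ih₂ m (hD.2 m) (forall_mem_of_diff (hr m)
        fun x hx => hH x (.inr (Set.mem_iUnion.2 ⟨m, hx⟩)))).2 (hl m)
  | eqE1 s Q a b m D₁ D₂ ih₁ ih₂ =>
    have ⟨h₁, h₁'⟩ := ih₁ hD.2.1 fun x hx => hH x (.inl hx)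
    have ⟨_, h₂'⟩ := ih₂ hD.2.2 fun x hx => hH x (.inr hx)
    have hM := h₁ (.inl hD.1)
    have hU := hT (m.rhs_subexpr s) hM
    exact ⟨fun _ => hU, fun _ => Set.union_subset (Set.union_subset
      (Set.singleton_subset_iff.2 hU) (h₁' hM)) (h₂' (hT (m.lhs_subexpr s) hM))⟩
  | eqE2 s Q a b m D₁ D₂ ih₁ ih₂ =>
    have ⟨h₁, h₁'⟩ := ih₁ hD.2.1 fun x hx => hH x (.inl hx)
    have ⟨_, h₂'⟩ := ih₂ hD.2.2 fun x hx => hH x (.inr hx)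
    have hM := h₁ (.inl hD.1)
    have hU := hT (m.lhs_subexpr s) hM
    exact ⟨fun _ => hU, fun _ => Set.union_subset (Set.union_subset
      (Set.singleton_subset_iff.2 hU) (h₁' hM)) (h₂' (hT (m.rhs_subexpr s) hM))⟩
  | iotaI s r Q φ ψ D₁ D₂ D₃ ih₁ ih₂ ih₃ =>
    refine ⟨fun hU => hU.elim (fun h => (h.1 trivial).elim) nofun, fun hU => ?_⟩
    refine Set.union_subset (Set.union_subset (Set.union_subset
      (Set.singleton_subset_iff.2 hU) ?_) ?_) ?_
    · exact (ih₁ hD.1 fun x hx => hH x (.inl (.inl hx))).2 (hT (.andL (.refl _)) hU)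
    · exact (ih₂ hD.2.1 fun x hx => hH x (.inl (.inr hx))).2 (hT (.andR (.andL (.refl _))) hU)
    · exact (ih₃ hD.2.2 fun x hx => hH x (.inr hx)).2 (hT (.andR (.andR (.refl _))) hU)
  | iotaE1 s r Q φ ψ D ih =>
    have ⟨h, h'⟩ := ih hD.2 hH
    have hM := h (.inl hD.1)
    have hU := hT (.andL (.refl _)) hM
    exact ⟨fun _ => hU, fun _ => Set.union_subset (Set.singleton_subset_iff.2 hU) (h' hM)⟩
  | iotaE2 s r Q φ ψ D ih =>
    have ⟨h, h'⟩ := ih hD.2 hH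
    have hM := h (.inl hD.1)
    have hU := hT (.andR (.andL (.refl _))) hM
    exact ⟨fun _ => hU, fun _ => Set.union_subset (Set.singleton_subset_iff.2 hU) (h' hM)⟩
  | iotaE3 s r Q φ ψ D ih =>
    have ⟨h, h'⟩ := ih hD.2 hH
    have hM := h (.inl hD.1)
    have hU := hT (.andR (.andR (.refl _))) hM
    exact ⟨fun _ => hU, fun _ => Set.union_subset (Set.singleton_subset_iff.2 hU) (h' hM)⟩

end QDef

theorem subexpression_property {S : QDef.Sig.{u}} (v : QDef.Base S) (Γ : Set (QDef.Un S))
    (U : QDef.Un S) {H : Set (ℕ × QDef.Un S)} (D : QDef.Deriv v H U)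
    (hΓ : ∀ x ∈ H, x.2 ∈ Γ) (hD : D.Normal) :
    ∀ W ∈ D.units, ∃ E ∈ Γ ∪ {U}, QDef.Subexpr W E :=
  (hD.units_subset (T := {W | ∃ E ∈ Γ ∪ {U}, QDef.Subexpr W E})
    (fun h ⟨E, hE, h'⟩ => ⟨E, hE, h.trans h'⟩)
    fun x hx => ⟨x.2, .inl (hΓ x hx), .refl _⟩).2 ⟨U, .inr rfl, .refl _⟩
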